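/- Let n ≥ 1 and m ≤ n, let ψ ∈ H_A ⊗ H_B ⊗ H_R be a unit vector, let f : V → (ZMod 2)^m be a surjective linear map, and let 0 ≤ ε ≤ 1. Suppose there is a family of POVMs (Λ^c_z)_{z∈V} on H_B, one for each c ∈ (ZMod 2)^m, such that ∑_{z∈V} ⟨ψ| (|z⟩⟨z| ⊗ Λ^{f(z)}_z ⊗ 1_R) |ψ⟩ ≥ 1 − ε (i.e., the Z-measurement outcome z is ε-recoverable from B together with the compressed value f(z)). Then for every surjective linear map g : V → (ZMod 2)^{n−m} with ker g = range fᵀ, the hashed X-key of n−m bits is √(2ε)-secure against R: D(σ_g^{KR}, 2^{−(n−m)} 1_K ⊗ ψ^R) ≤ √(2ε). -/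

import Mathlib

open Matrix BigOperators Finset
open scoped Classical ComplexOrder

noncomputable section

/-- The positive semidefinite square root of a positive semidefinite matrix
(the former Mathlib definition). -/
def Matrix.PosSemidef.sqrt {ι : Type*} [Fintype ι] [DecidableEq ι] {M : Matrix ι ι ℂ}
    (hM : M.PosSemidef) : Matrix ι ι ℂ :=
  hM.1.eigenvectorUnitary.1 * Matrix.diagonal ((↑) ∘ Real.sqrt ∘ hM.1.eigenvalues) *
    (star hM.1.eigenvectorUnitary : Matrix ι ι ℂ)

/-- The positive semidefinite square root of a matrix (zero if the matrix is not PSD). -/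
def psdSqrt {ι : Type*} [Fintype ι] [DecidableEq ι] (M : Matrix ι ι ℂ) : Matrix ι ι ℂ :=
  if h : M.PosSemidef then h.sqrt else 0

/-- Trace norm ‖M‖₁ = Tr √(M†M). -/
def traceNorm {ι : Type*} [Fintype ι] [DecidableEq ι] (M : Matrix ι ι ℂ) : ℝ :=
  ((psdSqrt (Mᴴ * M)).trace).re

/-- Trace distance D(ρ,σ) = ‖ρ−σ‖₁/2. -/
def traceDist {ι : Type*} [Fintype ι] [DecidableEq ι] (ρ σ : Matrix ι ι ℂ) : ℝ :=
  traceNorm (ρ - σ) / 2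

/-- The adjoint fᵀ of a linear map f : (ZMod 2)^n → (ZMod 2)^m with respect to the
standard bilinear forms ⟨u,v⟩ = ∑ i, u i * v i, i.e. the map with ⟨fᵀc, v⟩ = ⟨c, f v⟩. -/
def adjLin {n m : ℕ}
    (f : ((Fin n → ZMod 2)) →ₗ[ZMod 2] (Fin m → ZMod 2)) :
    ((Fin m → ZMod 2)) →ₗ[ZMod 2] (Fin n → ZMod 2) :=
  Matrix.toLin' (LinearMap.toMatrix' f)ᵀ

/-- Conjugate (X) basis vector of n qubits: |x̃⟩_z = (−1)^{⟨x,z⟩} / 2^{n/2}. -/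
def xVecV (n : ℕ) (x z : Fin n → ZMod 2) : ℂ :=
  (-1 : ℂ) ^ ((∑ i, x i * z i : ZMod 2)).val / (Real.sqrt (2 ^ n) : ℂ)

/-- Component of (⟨x̃|⊗1_{BR})|ψ⟩. -/
def condVecXV {n : ℕ} {β r : Type*} [Fintype β] [Fintype r]
    (ψ : (Fin n → ZMod 2) × β × r → ℂ) (x : Fin n → ZMod 2) (p : β × r) : ℂ :=
  ∑ z, (starRingEnd ℂ) (xVecV n x z) * ψ (z, p.1, p.2)

/-- Unnormalized conditional state ϑ_x^R = Tr_B[(⟨x̃|⊗1)|ψ⟩⟨ψ|(|x̃⟩⊗1)]. -/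
def thetaRV {n : ℕ} {β r : Type*} [Fintype β] [Fintype r]
    (ψ : (Fin n → ZMod 2) × β × r → ℂ) (x : Fin n → ZMod 2) : Matrix r r ℂ :=
  Matrix.of fun s s' => ∑ b, condVecXV ψ x (b, s) * (starRingEnd ℂ) (condVecXV ψ x (b, s'))

/-- Reduced state ψ^R = Tr_{AB}|ψ⟩⟨ψ|. -/
def reducedR {α β r : Type*} [Fintype α] [Fintype β] [Fintype r]
    (ψ : α × β × r → ℂ) : Matrix r r ℂ :=
  Matrix.of fun s s' => ∑ z, ∑ b, ψ (z, b, s) * (starRingEnd ℂ) (ψ (z, b, s'))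

/-- The hashed X-key state σ_g^{KR} = ∑_k |k⟩⟨k| ⊗ ∑_{x : g x = k} ϑ_x^R. -/
def keyState {n ℓ : ℕ} {β r : Type*} [Fintype β] [Fintype r]
    (ψ : (Fin n → ZMod 2) × β × r → ℂ)
    (g : ((Fin n → ZMod 2)) →ₗ[ZMod 2] (Fin ℓ → ZMod 2)) :
    Matrix ((Fin ℓ → ZMod 2) × r) ((Fin ℓ → ZMod 2) × r) ℂ :=
  Matrix.of fun p q =>
    if p.1 = q.1 then ∑ x ∈ Finset.univ.filter (fun x => g x = p.1), thetaRV ψ x p.2 q.2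
    else 0

/-- The ideal key state 2^{−ℓ} 1_K ⊗ ψ^R on ℓ key bits. -/
def idealKeyV (ℓ : ℕ) {n : ℕ} {β r : Type*} [Fintype β] [Fintype r]
    (ψ : (Fin n → ZMod 2) × β × r → ℂ) :
    Matrix ((Fin ℓ → ZMod 2) × r) ((Fin ℓ → ZMod 2) × r) ℂ :=
  Matrix.of fun p q => (if p.1 = q.1 then ((2 : ℂ) ^ ℓ)⁻¹ else 0) * reducedR ψ p.2 q.2

end

/-! The real and the ideal key are hashed keys of pure states: applying the Kraus operators `√Λ`
coherently, controlled on `f z`, turns `ψ` into `ω`, and coherently copying `z` turns `ψ` into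
`φ`. A value of `g` is blind to the coherences between blocks of `A` with different `f z`, because
shifting `x` by `fᵀ c` changes no value of `g` but flips the sign of such a coherence for a
suitable `c`; hence `ω` has the same key as `ψ`. The copy leaves no coherence at all, so the key
of `φ` is ideal. Finally `Λ ≤ √Λ` gives `Re ⟨φ|ω⟩ ≥ 1 - ε`, that is `‖ω - φ‖² ≤ 2ε`, and the trace
distance of two hashed keys is at most the distance of the pure states. -/

section TraceNorm

open scoped MatrixOrder

variable {ι : Type*} [Fintype ι] [DecidableEq ι]

lemma psdSqrt_eq_cfcSqrt {M : Matrix ι ι ℂ} (hM : M.PosSemidef) : psdSqrt M = CFC.sqrt M := by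
  rw [psdSqrt, dif_pos hM, CFC.sqrt_eq_real_sqrt M hM.nonneg, cfcₙ_eq_cfc, hM.1.cfc_eq]
  rfl

lemma traceNorm_eq_re_trace_abs (M : Matrix ι ι ℂ) : traceNorm M = (CFC.abs M).trace.re := by
  rw [traceNorm, psdSqrt_eq_cfcSqrt (posSemidef_conjTranspose_mul_self M), CFC.abs,
    star_eq_conjTranspose]

lemma exists_mem_unitaryGroup_mul_eq_abs {M : Matrix ι ι ℂ} (hM : M.IsHermitian) :
    ∃ U ∈ unitaryGroup ι ℂ, U * M = CFC.abs M := by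
  -- Unlike `SignType.sign`, `sgn` is nonzero at `0`, which makes `sgn M` unitary.
  let sgn : ℝ → ℝ := fun x => if 0 ≤ x then 1 else -1
  have hcont (h : ℝ → ℝ) : ContinuousOn h (spectrum ℝ M) :=
    (hM.spectrum_real_eq_range_eigenvalues ▸ Set.finite_range _).continuousOn h
  refine ⟨cfc sgn M, ?_, ?_⟩
  · have hsgn (x : ℝ) : sgn x * star (sgn x) = 1 := by
      simp only [sgn]
      split_ifs <;> simp
    rw [mem_unitaryGroup_iff, ← cfc_star .., ← cfc_mul _ _ M (hcont _) (hcont _),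
      funext hsgn, cfc_const_one ℝ M hM.isSelfAdjoint]
  · have hsgn (x : ℝ) : sgn x * x = ‖x‖ := by
      rcases le_or_gt 0 x with hx | hx
      · simp [sgn, hx, abs_of_nonneg]
      · simp [sgn, hx, abs_of_neg]
    nth_rewrite 2 [← cfc_id' ℝ M hM.isSelfAdjoint]
    rw [← cfc_mul _ _ M (hcont _) (hcont _), CFC.abs_eq_cfc_norm M hM.isSelfAdjoint, funext hsgn]

end TraceNorm

lemma le_cfcSqrt_of_le_one {A : Type*} [Ring A] [StarRing A] [TopologicalSpace A]
    [IsTopologicalRing A] [T2Space A] [PartialOrder A] [StarOrderedRing A] [Algebra ℝ A]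
    [ContinuousFunctionalCalculus ℝ A IsSelfAdjoint] [NonnegSpectrumClass ℝ A]
    {a : A} (ha₀ : 0 ≤ a) (ha₁ : a ≤ 1) : a ≤ CFC.sqrt a := by
  have ha : IsSelfAdjoint a := .of_nonneg ha₀
  rw [CFC.sqrt_eq_real_sqrt a ha₀, cfcₙ_eq_cfc]
  nth_rewrite 1 [← cfc_id' ℝ a]
  refine cfc_mono fun x hx => Real.le_sqrt_of_sq_le ?_
  have hx₀ : 0 ≤ x := spectrum_nonneg_of_nonneg ha₀ hx
  have hx₁ : x ≤ 1 := (CFC.le_one_iff a).1 ha₁ x hx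
  exact pow_le_of_le_one hx₀ hx₁ two_ne_zero

section Frobenius

open scoped Matrix.Norms.Frobenius

section RCLike

variable {𝕜 ι κ : Type*} [RCLike 𝕜] [Fintype ι] [Fintype κ]

lemma frobenius_norm_sq (A : Matrix ι κ 𝕜) : ‖A‖ ^ 2 = ∑ i, ∑ j, ‖A i j‖ ^ 2 := by
  rw [frobenius_norm_def, ← Real.sqrt_eq_rpow, Real.sq_sqrt (by positivity)]
  simp only [Real.rpow_two]

lemma frobenius_norm_sq_eq_re_trace (A : Matrix ι κ 𝕜) : ‖A‖ ^ 2 = RCLike.re (A * Aᴴ).trace := by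
  simp only [frobenius_norm_sq, trace, Matrix.diag_apply, mul_apply, conjTranspose_apply, map_sum,
    RCLike.star_def, RCLike.mul_conj, ← RCLike.ofReal_pow, RCLike.ofReal_re]

lemma frobenius_norm_unitary_mul [DecidableEq ι] {U : Matrix ι ι 𝕜}
    (hU : U ∈ unitaryGroup ι 𝕜) (A : Matrix ι κ 𝕜) : ‖U * A‖ = ‖A‖ := by
  rw [← sq_eq_sq₀ (norm_nonneg _) (norm_nonneg _), frobenius_norm_sq_eq_re_trace,
    frobenius_norm_sq_eq_re_trace, trace_mul_comm, trace_mul_comm A, conjTranspose_mul,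
    Matrix.mul_assoc, ← Matrix.mul_assoc Uᴴ, ← star_eq_conjTranspose U,
    mem_unitaryGroup_iff'.1 hU, Matrix.one_mul]

lemma norm_trace_mul_le_frobenius (A : Matrix ι κ 𝕜) (B : Matrix κ ι 𝕜) :
    ‖(A * B).trace‖ ≤ ‖A‖ * ‖B‖ := by
  refine (sq_le_sq₀ (norm_nonneg _) (by positivity)).1 ?_
  calc ‖(A * B).trace‖ ^ 2 = ‖∑ p : ι × κ, A p.1 p.2 * B p.2 p.1‖ ^ 2 := by
        simp only [trace, Matrix.diag_apply, mul_apply, Fintype.sum_prod_type]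
    _ ≤ (∑ p : ι × κ, ‖A p.1 p.2‖ * ‖B p.2 p.1‖) ^ 2 := by
        gcongr
        exact norm_sum_le_of_le _ fun p _ => norm_mul_le _ _
    _ ≤ (∑ p : ι × κ, ‖A p.1 p.2‖ ^ 2) * ∑ p : ι × κ, ‖B p.2 p.1‖ ^ 2 :=
        Finset.sum_mul_sq_le_sq_mul_sq _ _ _
    _ = (‖A‖ * ‖B‖) ^ 2 := by
        rw [mul_pow, frobenius_norm_sq, frobenius_norm_sq, Fintype.sum_prod_type,
          Fintype.sum_prod_type_right]

end RCLike

lemma traceNorm_mul_conjTranspose_sub_le {ι κ : Type*} [Fintype ι] [DecidableEq ι] [Fintype κ]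
    (X Y : Matrix ι κ ℂ) : traceNorm (X * Xᴴ - Y * Yᴴ) ≤ ‖X + Y‖ * ‖X - Y‖ := by
  obtain ⟨U, hU, habs⟩ := exists_mem_unitaryGroup_mul_eq_abs
    ((isHermitian_mul_conjTranspose_self X).sub (isHermitian_mul_conjTranspose_self Y))
  have hbound (G H : Matrix ι κ ℂ) : (U * (G * Hᴴ)).trace.re ≤ ‖G‖ * ‖H‖ :=
    calc (U * (G * Hᴴ)).trace.re ≤ ‖(U * G * Hᴴ).trace‖ := by
          rw [← Matrix.mul_assoc]
          exact Complex.re_le_norm _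
      _ ≤ ‖U * G‖ * ‖Hᴴ‖ := norm_trace_mul_le_frobenius _ _
      _ = ‖G‖ * ‖H‖ := by rw [frobenius_norm_unitary_mul hU, frobenius_norm_conjTranspose]
  have hpolar : (2 : ℝ) • (X * Xᴴ - Y * Yᴴ) = (X - Y) * (X + Y)ᴴ + (X + Y) * (X - Y)ᴴ := by
    simp only [conjTranspose_add, conjTranspose_sub, Matrix.sub_mul, Matrix.add_mul,
      Matrix.mul_sub, Matrix.mul_add, two_smul]
    abel
  have htrace : 2 * traceNorm (X * Xᴴ - Y * Yᴴ)
      = (U * ((X - Y) * (X + Y)ᴴ)).trace.re + (U * ((X + Y) * (X - Y)ᴴ)).trace.re := by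
    rw [traceNorm_eq_re_trace_abs, ← habs, ← Complex.add_re, ← trace_add, ← Matrix.mul_add,
      ← hpolar, Matrix.mul_smul, trace_smul, Complex.smul_re, smul_eq_mul]
  linarith [hbound (X - Y) (X + Y), hbound (X + Y) (X - Y), mul_comm ‖X - Y‖ ‖X + Y‖]

end Frobenius

section ConjugateBasis

variable {n m ℓ : ℕ}

lemma neg_one_pow_val_add (a b : ZMod 2) :
    (-1 : ℂ) ^ (a + b).val = (-1) ^ a.val * (-1) ^ b.val := by
  rw [ZMod.val_add, ← neg_one_pow_eq_pow_mod_two, pow_add]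

lemma conj_xVecV (x z : Fin n → ZMod 2) : (starRingEnd ℂ) (xVecV n x z) = xVecV n x z := by
  simp [xVecV]

lemma xVecV_add_left (x a z : Fin n → ZMod 2) :
    xVecV n (x + a) z = (-1 : ℂ) ^ (a ⬝ᵥ z).val * xVecV n x z := by
  have hadd : ∑ i, (x + a) i * z i = ∑ i, x i * z i + a ⬝ᵥ z := add_dotProduct x a z
  rw [xVecV, hadd, neg_one_pow_val_add, xVecV]
  ring

lemma xVecV_mul_self (x z : Fin n → ZMod 2) : xVecV n x z * xVecV n x z = ((2 : ℂ) ^ n)⁻¹ := by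
  rw [xVecV, div_mul_div_comm, ← pow_add, ← two_mul, pow_mul, neg_one_sq, one_pow,
    ← Complex.ofReal_mul, Real.mul_self_sqrt (by positivity), one_div]
  push_cast
  rfl

lemma sum_xVecV_mul_eq_zero {T : Finset (Fin n → ZMod 2)} {a z z' : Fin n → ZMod 2}
    (hT : ∀ x ∈ T, x + a ∈ T) (ha : a ⬝ᵥ z ≠ a ⬝ᵥ z') :
    ∑ x ∈ T, xVecV n x z * xVecV n x z' = 0 := by
  have hsign : (-1 : ℂ) ^ (a ⬝ᵥ z).val * (-1) ^ (a ⬝ᵥ z').val = -1 := by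
    have hsum : a ⬝ᵥ z + a ⬝ᵥ z' = 1 := by
      generalize a ⬝ᵥ z = u, a ⬝ᵥ z' = v at ha
      decide +revert
    rw [← neg_one_pow_val_add, hsum, ZMod.val_one, pow_one]
  refine Finset.sum_involution (fun x _ => x + a) (fun x _ => ?_) (fun x _ _ hx => ?_) hT
    fun x _ => ?_
  · rw [xVecV_add_left, xVecV_add_left]
    linear_combination (xVecV n x z * xVecV n x z') * hsign
  · simp [add_eq_left.1 hx] at ha
  · ext i
    simp [add_assoc, CharTwo.add_self_eq_zero]

lemma sum_xVecV_mul (z z' : Fin n → ZMod 2) :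
    ∑ x, xVecV n x z * xVecV n x z' = if z = z' then 1 else 0 := by
  split_ifs with h
  · subst h
    simp [xVecV_mul_self]
  · obtain ⟨i, hi⟩ := Function.ne_iff.1 h
    exact sum_xVecV_mul_eq_zero (a := Pi.single i 1) (by simp) (by simpa using hi)

lemma adjLin_dotProduct (f : (Fin n → ZMod 2) →ₗ[ZMod 2] (Fin m → ZMod 2))
    (c : Fin m → ZMod 2) (v : Fin n → ZMod 2) : adjLin f c ⬝ᵥ v = c ⬝ᵥ f v := by
  rw [adjLin, Matrix.toLin'_apply, mulVec_transpose, ← dotProduct_mulVec,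
    LinearMap.toMatrix'_mulVec]

lemma card_mul_card_fiber {G H F : Type*} [AddGroup G] [Fintype G] [AddGroup H] [Fintype H]
    [DecidableEq H] [FunLike F G H] [AddMonoidHomClass F G H] {g : F}
    (hg : Function.Surjective g) (k : H) :
    Fintype.card H * #{x | g x = k} = Fintype.card G := by
  have hfib (k' : H) : #{x | g x = k'} = #{x | g x = k} :=
    AddMonoidHom.card_fiber_eq_of_mem_range g (hg k') (hg k)
  calc Fintype.card H * #{x | g x = k} = ∑ k', #{x | g x = k'} := by simp [hfib]
    _ = Fintype.card G := (Finset.card_eq_sum_card_fiberwise fun _ _ => Finset.mem_univ _).symm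

/-- The projector `∑_{x : g x = k} |x̃⟩⟨x̃|` onto the outcome `k` of the hashed X-measurement, in
the computational basis. The basis vectors are real, so no conjugation is needed. -/
noncomputable def keyProjector (g : (Fin n → ZMod 2) →ₗ[ZMod 2] (Fin ℓ → ZMod 2))
    (k : Fin ℓ → ZMod 2) : Matrix (Fin n → ZMod 2) (Fin n → ZMod 2) ℂ :=
  Matrix.of fun z z' => ∑ x with g x = k, xVecV n x z * xVecV n x z'

lemma keyProjector_apply_of_ne {f : (Fin n → ZMod 2) →ₗ[ZMod 2] (Fin m → ZMod 2)}
    {g : (Fin n → ZMod 2) →ₗ[ZMod 2] (Fin ℓ → ZMod 2)}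
    (hgf : LinearMap.range (adjLin f) ≤ LinearMap.ker g) (k : Fin ℓ → ZMod 2)
    {z z' : Fin n → ZMod 2} (h : f z ≠ f z') : keyProjector g k z z' = 0 := by
  obtain ⟨i, hi⟩ := Function.ne_iff.1 h
  have hg : g (adjLin f (Pi.single i 1)) = 0 := hgf ⟨_, rfl⟩
  refine sum_xVecV_mul_eq_zero (a := adjLin f (Pi.single i 1)) (fun x hx => ?_) ?_
  · simpa [hg] using hx
  · simpa [adjLin_dotProduct] using hi

lemma keyProjector_apply_self {g : (Fin n → ZMod 2) →ₗ[ZMod 2] (Fin ℓ → ZMod 2)}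
    (hg : Function.Surjective g) (k : Fin ℓ → ZMod 2) (z : Fin n → ZMod 2) :
    keyProjector g k z z = ((2 : ℂ) ^ ℓ)⁻¹ := by
  have hcard : (2 : ℂ) ^ ℓ * #{x | g x = k} = 2 ^ n := by
    have h : 2 ^ ℓ * #{x | g x = k} = 2 ^ n := by
      simpa using card_mul_card_fiber hg k
    exact_mod_cast h
  simp only [keyProjector, of_apply, xVecV_mul_self, Finset.sum_const, nsmul_eq_mul]
  rw [← div_eq_mul_inv, div_eq_iff (pow_ne_zero n two_ne_zero), ← hcard,
    inv_mul_cancel_left₀ (pow_ne_zero ℓ two_ne_zero)]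

end ConjugateBasis

section PureStates

variable {α β γ r : Type*} [Fintype β] [Fintype γ]

/-- The operator `Tr_B |ω_z⟩⟨ω_{z'}|` on `R`, where `|ω_z⟩ = (⟨z| ⊗ 1)|ω⟩`: the block of the
reduced state on `A ⊗ R` at position `(z, z')`. -/
noncomputable def coherence (ω : α × β × r → ℂ) (z z' : α) : Matrix r r ℂ :=
  Matrix.of fun s s' => ∑ b, ω (z, b, s) * (starRingEnd ℂ) (ω (z', b, s'))

lemma sum_norm_sq_eq_re_trace_coherence [Fintype α] [Fintype r] (ω : α × β × r → ℂ) :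
    ∑ t, ‖ω t‖ ^ 2 = (∑ z, (coherence ω z z).trace).re := by
  simp only [Fintype.sum_prod_type, trace, Matrix.diag_apply, coherence, of_apply, Complex.mul_conj,
    Complex.normSq_eq_norm_sq, Complex.re_sum, Complex.ofReal_re]
  exact Finset.sum_congr rfl fun z _ => Finset.sum_comm

lemma sum_norm_sq_eq_of_coherence_eq [Fintype α] [Fintype r] {ω : α × β × r → ℂ}
    {φ : α × γ × r → ℂ} (h : ∀ z, coherence ω z z = coherence φ z z) :
    ∑ t, ‖ω t‖ ^ 2 = ∑ t, ‖φ t‖ ^ 2 := by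
  simp only [sum_norm_sq_eq_re_trace_coherence, h]

/-- The state after a coherent measurement of `B`, controlled on `z`, with Kraus operators `S z c`;
the outcome `c` is kept in a new register on Bob's side. -/
noncomputable def coherentMeasurement {κ γ : Type*} (S : α → κ → Matrix γ β ℂ)
    (ψ : α × β × r → ℂ) : α × (κ × γ) × r → ℂ :=
  fun t => (S t.1 t.2.1.1 *ᵥ fun b => ψ (t.1, b, t.2.2)) t.2.1.2

/-- The state after coherently copying the computational basis of `A` into a new register on Bob's
side. -/
noncomputable def coherentCopy {α β r : Type*} (ψ : α × β × r → ℂ) : α × (α × β) × r → ℂ :=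
  fun t => if t.1 = t.2.1.1 then ψ (t.1, t.2.1.2, t.2.2) else 0

lemma sum_mulVec_dotProduct_star_mulVec {R κ : Type*} [CommSemiring R] [StarRing R] [Fintype κ]
    [DecidableEq β] {S : κ → Matrix γ β R} (hS : ∑ c, (S c)ᴴ * S c = 1) (u v : β → R) :
    ∑ c, (S c *ᵥ u) ⬝ᵥ star (S c *ᵥ v) = u ⬝ᵥ star v := by
  have hc (c : κ) : (S c *ᵥ u) ⬝ᵥ star (S c *ᵥ v) = star v ⬝ᵥ (((S c)ᴴ * S c) *ᵥ u) := by
    rw [dotProduct_comm, star_mulVec, ← dotProduct_mulVec, mulVec_mulVec]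
  simp only [hc]
  rw [← dotProduct_sum, ← sum_mulVec, hS, one_mulVec, dotProduct_comm]

lemma coherence_coherentMeasurement {κ : Type*} [Fintype κ] [DecidableEq β]
    {S : α → κ → Matrix γ β ℂ} (hS : ∀ z, ∑ c, (S z c)ᴴ * S z c = 1) (ψ : α × β × r → ℂ)
    {z z' : α} (h : S z = S z') :
    coherence (coherentMeasurement S ψ) z z' = coherence ψ z z' := by
  ext s s'
  simp only [coherence, of_apply, Fintype.sum_prod_type, coherentMeasurement, h]
  exact sum_mulVec_dotProduct_star_mulVec (hS z') _ _

lemma sum_norm_sq_coherentMeasurement {κ : Type*} [Fintype α] [Fintype r] [Fintype κ]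
    [DecidableEq β] {S : α → κ → Matrix γ β ℂ} (hS : ∀ z, ∑ c, (S z c)ᴴ * S z c = 1)
    (ψ : α × β × r → ℂ) : ∑ t, ‖coherentMeasurement S ψ t‖ ^ 2 = ∑ t, ‖ψ t‖ ^ 2 :=
  sum_norm_sq_eq_of_coherence_eq fun _ => coherence_coherentMeasurement hS ψ rfl

lemma coherence_coherentCopy [Fintype α] (ψ : α × β × r → ℂ) (z z' : α) :
    coherence (coherentCopy ψ) z z' = if z = z' then coherence ψ z z else 0 := by
  ext s s'
  rw [coherence, of_apply, Fintype.sum_prod_type, Finset.sum_eq_single z]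
  · split_ifs with h
    · simp [coherence, coherentCopy, h]
    · simp [coherentCopy, Ne.symm h]
  · intro c _ hc
    simp [coherentCopy, hc.symm]
  · simp

lemma sum_norm_sq_coherentCopy [Fintype α] [Fintype r] (ψ : α × β × r → ℂ) :
    ∑ t, ‖coherentCopy ψ t‖ ^ 2 = ∑ t, ‖ψ t‖ ^ 2 :=
  sum_norm_sq_eq_of_coherence_eq fun z => by rw [coherence_coherentCopy, if_pos rfl]

/-- The expectation value `⟨ψ| (∑ z, |z⟩⟨z| ⊗ N z ⊗ 1_R) |ψ⟩`. -/
noncomputable def controlledExpectation [Fintype α] [Fintype r] (N : α → Matrix β β ℂ)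
    (ψ : α × β × r → ℂ) : ℂ :=
  ∑ z, ∑ b, ∑ b', ∑ s, (starRingEnd ℂ) (ψ (z, b, s)) * N z b b' * ψ (z, b', s)

lemma controlledExpectation_eq_sum_dotProduct [Fintype α] [Fintype r] (N : α → Matrix β β ℂ)
    (ψ : α × β × r → ℂ) :
    controlledExpectation N ψ
      = ∑ z, ∑ s, star (fun b => ψ (z, b, s)) ⬝ᵥ (N z *ᵥ fun b => ψ (z, b, s)) := by
  refine Finset.sum_congr rfl fun z _ => ?_
  simp only [dotProduct, mulVec, Finset.mul_sum, Pi.star_apply, starRingEnd_apply, mul_assoc]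
  rw [Finset.sum_comm (γ := r)]
  exact Finset.sum_congr rfl fun b _ => Finset.sum_comm

open scoped MatrixOrder in
lemma re_controlledExpectation_mono [Fintype α] [Fintype r] {M N : α → Matrix β β ℂ}
    (h : ∀ z, M z ≤ N z) (ψ : α × β × r → ℂ) :
    (controlledExpectation M ψ).re ≤ (controlledExpectation N ψ).re := by
  simp only [controlledExpectation_eq_sum_dotProduct, Complex.re_sum]
  refine Finset.sum_le_sum fun z _ => Finset.sum_le_sum fun s _ => ?_
  have hz := (Complex.le_def.1 ((le_iff.1 (h z)).dotProduct_mulVec_nonneg fun b => ψ (z, b, s))).1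
  rwa [sub_mulVec, dotProduct_sub, Complex.sub_re, Complex.zero_re, sub_nonneg] at hz

lemma sum_conj_coherentCopy_mul_coherentMeasurement [Fintype α] [Fintype r]
    (S : α → α → Matrix β β ℂ) (ψ : α × β × r → ℂ) :
    ∑ t, (starRingEnd ℂ) (coherentCopy ψ t) * coherentMeasurement S ψ t
      = controlledExpectation (fun z => S z z) ψ := by
  rw [controlledExpectation_eq_sum_dotProduct, Fintype.sum_prod_type]
  refine Finset.sum_congr rfl fun z _ => ?_
  rw [Fintype.sum_prod_type, Fintype.sum_prod_type, Finset.sum_eq_single z]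
  · rw [Finset.sum_comm]
    simp [coherentCopy, coherentMeasurement, dotProduct]
  · intro c _ hc
    simp [coherentCopy, hc.symm]
  · simp

lemma sum_norm_sub_sq {𝕜 ι : Type*} [RCLike 𝕜] [Fintype ι] (ω φ : ι → 𝕜) :
    ∑ t, ‖(ω - φ) t‖ ^ 2 = ∑ t, ‖ω t‖ ^ 2 + ∑ t, ‖φ t‖ ^ 2
      - 2 * RCLike.re (∑ t, (starRingEnd 𝕜) (φ t) * ω t) := by
  have h (t : ι) : ‖(ω - φ) t‖ ^ 2
      = ‖ω t‖ ^ 2 + ‖φ t‖ ^ 2 - 2 * RCLike.re ((starRingEnd 𝕜) (φ t) * ω t) := by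
    rw [Pi.sub_apply, norm_sub_rev, norm_sub_sq (𝕜 := 𝕜), RCLike.inner_apply']
    ring
  simp only [h, Finset.sum_sub_distrib, Finset.sum_add_distrib, Finset.mul_sum, map_sum]

lemma sum_norm_sq_coherentMeasurement_sub_coherentCopy [Fintype α] [Fintype r] [DecidableEq β]
    {S : α → α → Matrix β β ℂ} (hS : ∀ z, ∑ c, (S z c)ᴴ * S z c = 1) (ψ : α × β × r → ℂ) :
    ∑ t, ‖(coherentMeasurement S ψ - coherentCopy ψ) t‖ ^ 2
      = 2 * (∑ t, ‖ψ t‖ ^ 2 - (controlledExpectation (fun z => S z z) ψ).re) := by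
  rw [sum_norm_sub_sq, sum_conj_coherentCopy_mul_coherentMeasurement,
    sum_norm_sq_coherentMeasurement hS, sum_norm_sq_coherentCopy, RCLike.re_eq_complex_re]
  ring

end PureStates

section HashedKey

variable {n m ℓ : ℕ} {β γ r : Type*} [Fintype β] [Fintype γ] [Fintype r]
  {f : (Fin n → ZMod 2) →ₗ[ZMod 2] (Fin m → ZMod 2)}
  {g : (Fin n → ZMod 2) →ₗ[ZMod 2] (Fin ℓ → ZMod 2)}

lemma sum_thetaRV (ω : (Fin n → ZMod 2) × β × r → ℂ) (T : Finset (Fin n → ZMod 2)) :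
    ∑ x ∈ T, thetaRV ω x
      = ∑ z, ∑ z', (∑ x ∈ T, xVecV n x z * xVecV n x z') • coherence ω z z' := by
  have hx (x : Fin n → ZMod 2) :
      thetaRV ω x = ∑ z, ∑ z', (xVecV n x z * xVecV n x z') • coherence ω z z' := by
    ext s s'
    simp only [thetaRV, condVecXV, coherence, of_apply, map_sum, map_mul, conj_xVecV,
      Finset.sum_mul_sum, Matrix.sum_apply, Matrix.smul_apply, smul_eq_mul]
    rw [Finset.sum_comm]
    refine Finset.sum_congr rfl fun z _ => ?_
    rw [Finset.sum_comm]
    refine Finset.sum_congr rfl fun z' _ => ?_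
    rw [Finset.mul_sum]
    exact Finset.sum_congr rfl fun b _ => by ring
  simp only [hx, Finset.sum_smul]
  rw [Finset.sum_comm]
  exact Finset.sum_congr rfl fun z _ => Finset.sum_comm

lemma keyState_apply (g : (Fin n → ZMod 2) →ₗ[ZMod 2] (Fin ℓ → ZMod 2))
    (ω : (Fin n → ZMod 2) × β × r → ℂ) (p q : (Fin ℓ → ZMod 2) × r) :
    keyState ω g p q = if p.1 = q.1 then
      (∑ z, ∑ z', keyProjector g p.1 z z' • coherence ω z z') p.2 q.2 else 0 := by
  simp only [keyState, keyProjector, of_apply, ← sum_thetaRV]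
  simp only [Matrix.sum_apply]

lemma keyState_eq_of_coherence_eq (hgf : LinearMap.range (adjLin f) ≤ LinearMap.ker g)
    {ω : (Fin n → ZMod 2) × β × r → ℂ} {φ : (Fin n → ZMod 2) × γ × r → ℂ}
    (h : ∀ z z', f z = f z' → coherence ω z z' = coherence φ z z') :
    keyState ω g = keyState φ g := by
  have hblock (k : Fin ℓ → ZMod 2) (z z' : Fin n → ZMod 2) :
      keyProjector g k z z' • coherence ω z z' = keyProjector g k z z' • coherence φ z z' := by
    by_cases hz : f z = f z'
    · rw [h z z' hz]
    · rw [keyProjector_apply_of_ne hgf k hz, zero_smul, zero_smul]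
  ext p q
  simp only [keyState_apply, hblock]

lemma keyState_coherentCopy (hg : Function.Surjective g) (ψ : (Fin n → ZMod 2) × β × r → ℂ) :
    keyState (coherentCopy ψ) g = idealKeyV ℓ ψ := by
  have hreduced : reducedR ψ = ∑ z, coherence ψ z z := by
    ext s s'
    simp only [reducedR, coherence, of_apply, Matrix.sum_apply]
  ext p q
  simp only [keyState_apply, coherence_coherentCopy, smul_ite, smul_zero, Finset.sum_ite_eq,
    Finset.mem_univ, if_true, keyProjector_apply_self hg, ← Finset.smul_sum, ← hreduced,
    Matrix.smul_apply, smul_eq_mul, idealKeyV, of_apply, ite_mul, zero_mul]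

lemma trace_keyState (g : (Fin n → ZMod 2) →ₗ[ZMod 2] (Fin ℓ → ZMod 2))
    (ω : (Fin n → ZMod 2) × β × r → ℂ) :
    (keyState ω g).trace = ∑ z, (coherence ω z z).trace :=
  calc (keyState ω g).trace = (∑ x, thetaRV ω x).trace := by
        simp only [trace, Matrix.diag_apply, keyState, of_apply, if_true, Fintype.sum_prod_type,
          Matrix.sum_apply]
        rw [Finset.sum_comm]
        exact Finset.sum_congr rfl fun s _ => Finset.sum_fiberwise _ _ _
    _ = ∑ z, (coherence ω z z).trace := by
        simp only [sum_thetaRV, sum_xVecV_mul, ite_smul, one_smul, zero_smul, Finset.sum_ite_eq,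
          Finset.mem_univ, if_true, trace_sum]

/-- A purification of the hashed key state, written as a matrix from the purifying system, which
holds the X-outcome `x` and `B`, to `K ⊗ R`. -/
noncomputable def keyPurification (g : (Fin n → ZMod 2) →ₗ[ZMod 2] (Fin ℓ → ZMod 2))
    (ω : (Fin n → ZMod 2) × β × r → ℂ) :
    Matrix ((Fin ℓ → ZMod 2) × r) ((Fin n → ZMod 2) × β) ℂ :=
  Matrix.of fun p q => if g q.1 = p.1 then condVecXV ω q.1 (q.2, p.2) else 0

lemma keyPurification_sub (g : (Fin n → ZMod 2) →ₗ[ZMod 2] (Fin ℓ → ZMod 2))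
    (ω φ : (Fin n → ZMod 2) × β × r → ℂ) :
    keyPurification g (ω - φ) = keyPurification g ω - keyPurification g φ := by
  ext p q
  simp only [keyPurification, of_apply, Matrix.sub_apply, condVecXV, Pi.sub_apply, mul_sub,
    Finset.sum_sub_distrib]
  split_ifs <;> simp

lemma keyPurification_mul_conjTranspose (g : (Fin n → ZMod 2) →ₗ[ZMod 2] (Fin ℓ → ZMod 2))
    (ω : (Fin n → ZMod 2) × β × r → ℂ) :
    keyPurification g ω * (keyPurification g ω)ᴴ = keyState ω g := by
  ext p q
  rw [mul_apply, Fintype.sum_prod_type]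
  simp only [keyPurification, keyState, of_apply, conjTranspose_apply, thetaRV]
  split_ifs with h
  · rw [Finset.sum_filter]
    refine Finset.sum_congr rfl fun x _ => ?_
    rw [← h]
    split_ifs <;> simp
  · refine Finset.sum_eq_zero fun x _ => Finset.sum_eq_zero fun b _ => ?_
    by_cases hx : g x = p.1
    · simp [← hx, show g x ≠ q.1 from fun hq => h (hx.symm.trans hq)]
    · simp [hx]

open scoped Matrix.Norms.Frobenius in
lemma norm_keyPurification (g : (Fin n → ZMod 2) →ₗ[ZMod 2] (Fin ℓ → ZMod 2))
    (ω : (Fin n → ZMod 2) × β × r → ℂ) : ‖keyPurification g ω‖ = √(∑ t, ‖ω t‖ ^ 2) := by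
  rw [sum_norm_sq_eq_re_trace_coherence, ← trace_keyState g, ← keyPurification_mul_conjTranspose,
    ← RCLike.re_eq_complex_re, ← frobenius_norm_sq_eq_re_trace, Real.sqrt_sq (norm_nonneg _)]

open scoped Matrix.Norms.Frobenius in
lemma traceDist_keyState_le [DecidableEq r] (g : (Fin n → ZMod 2) →ₗ[ZMod 2] (Fin ℓ → ZMod 2))
    {ω φ : (Fin n → ZMod 2) × β × r → ℂ} (hω : ∑ t, ‖ω t‖ ^ 2 = 1) (hφ : ∑ t, ‖φ t‖ ^ 2 = 1) :
    traceDist (keyState ω g) (keyState φ g) ≤ √(∑ t, ‖(ω - φ) t‖ ^ 2) := by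
  set X := keyPurification g ω
  set Y := keyPurification g φ
  have hadd : ‖X + Y‖ ≤ 2 := by
    have h := norm_add_le X Y
    rw [norm_keyPurification, norm_keyPurification, hω, hφ, Real.sqrt_one] at h
    linarith
  calc traceDist (keyState ω g) (keyState φ g) = traceNorm (X * Xᴴ - Y * Yᴴ) / 2 := by
        rw [traceDist, keyPurification_mul_conjTranspose, keyPurification_mul_conjTranspose]
    _ ≤ ‖X + Y‖ * ‖X - Y‖ / 2 := by
        gcongr
        exact traceNorm_mul_conjTranspose_sub_le X Y
    _ ≤ 2 * ‖X - Y‖ / 2 := by gcongr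
    _ = √(∑ t, ‖(ω - φ) t‖ ^ 2) := by
        rw [mul_div_cancel_left₀ _ two_ne_zero, ← keyPurification_sub, norm_keyPurification]

end HashedKey

open scoped MatrixOrder in
theorem csi_implies_pa_general {n m ℓ : ℕ} {β r : Type*} [Fintype β] [DecidableEq β] [Fintype r]
    [DecidableEq r] {ψ : (Fin n → ZMod 2) × β × r → ℂ} (hψ : ∑ t, ‖ψ t‖ ^ 2 = 1)
    {f : (Fin n → ZMod 2) →ₗ[ZMod 2] (Fin m → ZMod 2)}
    {g : (Fin n → ZMod 2) →ₗ[ZMod 2] (Fin ℓ → ZMod 2)} (hg : Function.Surjective g)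
    (hgf : LinearMap.range (adjLin f) ≤ LinearMap.ker g)
    {Λ : (Fin m → ZMod 2) → (Fin n → ZMod 2) → Matrix β β ℂ}
    (hΛpos : ∀ c z, (Λ c z).PosSemidef) (hΛsum : ∀ c, ∑ z, Λ c z = 1) {ε : ℝ}
    (hguess : 1 - ε ≤ (controlledExpectation (fun z => Λ (f z) z) ψ).re) :
    traceDist (keyState ψ g) (idealKeyV ℓ ψ) ≤ √(2 * ε) := by
  have hΛle (c z) : Λ c z ≤ 1 :=
    hΛsum c ▸ Finset.single_le_sum (fun z' _ => (hΛpos c z').nonneg) (Finset.mem_univ z)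
  let S : (Fin n → ZMod 2) → (Fin n → ZMod 2) → Matrix β β ℂ := fun z z' => CFC.sqrt (Λ (f z) z')
  have hS (z) : ∑ z', (S z z')ᴴ * S z z' = 1 := by
    rw [← hΛsum (f z)]
    refine Finset.sum_congr rfl fun z' _ => ?_
    rw [← star_eq_conjTranspose, (CFC.sqrt_nonneg _).isSelfAdjoint.star_eq,
      CFC.sqrt_mul_sqrt_self _ (hΛpos _ _).nonneg]
  have hdist : ∑ t, ‖(coherentMeasurement S ψ - coherentCopy ψ) t‖ ^ 2 ≤ 2 * ε := by
    have hmono := re_controlledExpectation_mono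
      (fun z => le_cfcSqrt_of_le_one (hΛpos (f z) z).nonneg (hΛle (f z) z)) ψ
    rw [sum_norm_sq_coherentMeasurement_sub_coherentCopy hS, hψ]
    linarith
  have hmeasured : keyState (coherentMeasurement S ψ) g = keyState ψ g :=
    keyState_eq_of_coherence_eq hgf fun z z' h =>
      coherence_coherentMeasurement hS ψ (by simp only [S, h])
  rw [← hmeasured, ← keyState_coherentCopy hg]
  exact (traceDist_keyState_le g ((sum_norm_sq_coherentMeasurement hS ψ).trans hψ)
    ((sum_norm_sq_coherentCopy ψ).trans hψ)).trans (Real.sqrt_le_sqrt hdist)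

/-- If the Z-measurement outcome z is ε-recoverable from B together with the
compressed value f(z) (f a surjective linear map to m bits), then for every surjective linear
map g to n−m bits with ker g = range fᵀ, the hashed X-key of n−m bits is √(2ε)-secure
against R. -/
theorem csi_implies_pa {n m : ℕ} (hn : 1 ≤ n) (hm : m ≤ n)
    {β r : Type*} [Fintype β] [DecidableEq β] [Fintype r] [DecidableEq r]
    (ψ : (Fin n → ZMod 2) × β × r → ℂ) (hψ : ∑ t, ‖ψ t‖ ^ 2 = 1)
    (f : ((Fin n → ZMod 2)) →ₗ[ZMod 2] (Fin m → ZMod 2)) (hf : Function.Surjective f)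
    (ε : ℝ) (hε0 : 0 ≤ ε) (hε1 : ε ≤ 1)
    (Λ : (Fin m → ZMod 2) → (Fin n → ZMod 2) → Matrix β β ℂ)
    (hΛpos : ∀ c z, (Λ c z).PosSemidef) (hΛsum : ∀ c, ∑ z, Λ c z = 1)
    (hguess : 1 - ε ≤ (∑ z, ∑ b, ∑ b', ∑ s,
        (starRingEnd ℂ) (ψ (z, b, s)) * Λ (f z) z b b' * ψ (z, b', s)).re) :
    ∀ g : ((Fin n → ZMod 2)) →ₗ[ZMod 2] (Fin (n - m) → ZMod 2),
      Function.Surjective g → LinearMap.ker g = LinearMap.range (adjLin f) →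
      traceDist (keyState ψ g) (idealKeyV (n - m) ψ) ≤ Real.sqrt (2 * ε) := by
  intro g hg hker
  exact csi_implies_pa_general hψ hg hker.ge hΛpos hΛsum hguess
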